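/- DEC lower bound for the Example (Proposition 2, first part). Assume 180·T ≤ exp(d/8), K ≤ 20T, and K ≥ 6000/γ², and let ε := 1/(3√T). Then for every probability distribution p on Π there exists a model (w,k) in M̃ such that E_{(π',π)∼p}[(f_{w,k}(π',π) − f̂(π',π))²] ≤ ε² and E_{(π',π)∼p}[γ·1 − f_{w,k}(π',π)] ≥ (γ/2)·√(K/(20T)). Consequently, dec^γ_ε(M̃ ∪ {M̂}, M̂) ≥ (γ/2)·√(K/(20T)), where M̂ is the Gaussian bandit model with mean function f̂ and every model in M̃ has maximum mean reward 1. -/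

import Mathlib

/-!
For every `x`, a uniformly random sign vector `w` has `E exp(⟨x, w⟩ / 2) = cosh(1/2)^d ≤ exp(d/8)`,
and `h_w(x) ≤ exp((⟨x, w⟩ - d/2) / 2)`, so `E h_w(x) ≤ exp(-d/8)`. Averaging over `w` and over `k`,
any `p` has a `w` with `E_p h_w ≤ exp(-d/8) ≤ 1/(9T)` and an arm `k` of mass at most `1/K`.
With `Δ = √(K/(20T))`, the difference `f_{w,k} - f̂` is the convex combination
`(1-γ) h_w + γ Δ 1_k`, so convexity of the square bounds the squared error by
`(1-γ) E h_w + γ Δ²/K ≤ 1/(9T)`. The regret is `γΔ(1 - p(k)) - (1-γ) E h_w`, which keeps half of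
`γΔ` because `p(k) ≤ 1/K ≤ 1/4` and `E h_w ≤ 1/(9T) ≤ γΔ/4`.
-/

open MeasureTheory ProbabilityTheory
open scoped ENNReal NNReal

noncomputable section

def sgn (b : Bool) : ℝ := if b then 1 else -1

/-- Inner product of two sign vectors in `{−1,1}^d`, encoded by `Fin d → Bool`. -/
def ip {d : ℕ} (w x : Fin d → Bool) : ℝ := ∑ i, sgn (w i) * sgn (x i)

/-- The action set `({−1,1}^d ∪ {⊥}) × [K]`; `none` plays the role of `⊥`. -/
abbrev ExAct (d K : ℕ) := Option (Fin d → Bool) × Fin K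

instance (d K : ℕ) : MeasurableSpace (ExAct d K) := ⊤

/-- `h_w(π') = (2/d)·max(0, ⟨π',w⟩ − d/2)` with `h_w(⊥) = 0`. -/
def hfun {d : ℕ} (w : Fin d → Bool) : Option (Fin d → Bool) → ℝ
  | none => 0
  | some x => (2 / (d:ℝ)) * max 0 (ip x w - d/2)

/-- Mean reward of the model `(w,k)` of the subclass `M̃`: `v_k = 1` and
`v_j = 1 − √(K/(20T))` for `j ≠ k`. -/
def fEx (d K T : ℕ) (γ : ℝ) (w : Fin d → Bool) (k : Fin K) : ExAct d K → ℝ :=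
  fun a => (1 - γ) * hfun w a.1 +
    γ * (if a.2 = k then 1 else 1 - Real.sqrt ((K:ℝ) / (20 * (T:ℝ))))

/-- The constant reference mean `f̂ = γ(1 − √(K/(20T)))`. -/
def fhat (d K T : ℕ) (γ : ℝ) : ExAct d K → ℝ :=
  fun _ => γ * (1 - Real.sqrt ((K:ℝ) / (20 * (T:ℝ))))

/-- Constrained γ-DEC of a class of mean reward functions with respect to a
reference mean function `fbar`. -/
def decConstrained {P : Type*} [MeasurableSpace P] (γ ε : ℝ)
    (F : Set (P → ℝ)) (fbar : P → ℝ) : ℝ :=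
  ⨅ p : ProbabilityMeasure P,
    ⨆ f : {f : P → ℝ // f ∈ F ∧ ∫ x, (f x - fbar x)^2 ∂(p : Measure P) ≤ ε^2},
      ∫ x, (γ * (⨆ y, (f : P → ℝ) y) - (f : P → ℝ) x) ∂(p : Measure P)

section Averaging

variable {Ω ι : Type*} [MeasurableSpace Ω] [Fintype ι] [Nonempty ι]
  (μ : Measure Ω) [IsProbabilityMeasure μ]

lemma exists_integral_le_of_sum_le {f : ι → Ω → ℝ} (hf : ∀ i, Integrable (f i) μ) {c : ℝ}
    (hc : ∀ ω, ∑ i, f i ω ≤ Fintype.card ι * c) : ∃ i, ∫ ω, f i ω ∂μ ≤ c := by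
  have hsum : ∑ i, ∫ ω, f i ω ∂μ ≤ ∑ _i : ι, c := calc
    ∑ i, ∫ ω, f i ω ∂μ = ∫ ω, ∑ i, f i ω ∂μ := (integral_finsetSum _ fun i _ ↦ hf i).symm
    _ ≤ ∫ _, Fintype.card ι * c ∂μ :=
      integral_mono (integrable_finsetSum _ fun i _ ↦ hf i) (integrable_const _) hc
    _ = ∑ _i : ι, c := by simp
  obtain ⟨i, -, hi⟩ := Finset.exists_le_of_sum_le Finset.univ_nonempty hsum
  exact ⟨i, hi⟩

lemma exists_measureReal_preimage_singleton_le [MeasurableSpace ι] [MeasurableSingletonClass ι]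
    {X : Ω → ι} (hX : Measurable X) : ∃ i, μ.real (X ⁻¹' {i}) ≤ 1 / Fintype.card ι := by
  have hsum : ∑ i, μ.real (X ⁻¹' {i}) ≤ ∑ _i : ι, (1 / Fintype.card ι : ℝ) := by
    rw [sum_measureReal_preimage_singleton _ fun i _ ↦ hX (measurableSet_singleton i)]
    simp
  obtain ⟨i, -, hi⟩ := Finset.exists_le_of_sum_le Finset.univ_nonempty hsum
  exact ⟨i, hi⟩

end Averaging

lemma le_decConstrained {P : Type*} [MeasurableSpace P] [Nonempty P] {γ ε c : ℝ}
    {F : Set (P → ℝ)} {fbar : P → ℝ} (hF : F.Finite)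
    (h : ∀ p : ProbabilityMeasure P, ∃ f ∈ F, ∫ x, (f x - fbar x) ^ 2 ∂(p : Measure P) ≤ ε ^ 2 ∧
      c ≤ ∫ x, (γ * (⨆ y, f y) - f x) ∂(p : Measure P)) :
    c ≤ decConstrained γ ε F fbar := by
  inhabit P
  refine le_ciInf fun p ↦ ?_
  obtain ⟨f, hfF, hf, hc⟩ := h p
  have : Finite {f : P → ℝ // f ∈ F ∧ ∫ x, (f x - fbar x) ^ 2 ∂(p : Measure P) ≤ ε ^ 2} :=
    (hF.subset fun f hf ↦ hf.1).to_subtype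
  exact le_ciSup_of_le (Set.finite_range _).bddAbove ⟨f, hfF, hf⟩ hc

section SignVectors

variable {d : ℕ}

lemma sgn_mul_le_one (a b : Bool) : sgn a * sgn b ≤ 1 := by
  cases a <;> cases b <;> norm_num [sgn]

lemma sgn_mul_self (b : Bool) : sgn b * sgn b = 1 := by
  cases b <;> norm_num [sgn]

lemma ip_le (w x : Fin d → Bool) : ip w x ≤ d :=
  calc ip w x ≤ ∑ _i : Fin d, (1 : ℝ) := Finset.sum_le_sum fun _ _ ↦ sgn_mul_le_one _ _
    _ = d := by simp

lemma ip_self (w : Fin d → Bool) : ip w w = d := by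
  simp [ip, sgn_mul_self]

lemma sum_exp_mul_ip (t : ℝ) (x : Fin d → Bool) :
    ∑ w, Real.exp (t * ip x w) = (2 * Real.cosh t) ^ d := by
  have hcoord (a : Bool) : ∑ b, Real.exp (t * (sgn a * sgn b)) = 2 * Real.cosh t := by
    rw [Real.cosh_eq, mul_div_cancel₀ _ two_ne_zero]
    cases a <;> simp [sgn, add_comm]
  calc ∑ w, Real.exp (t * ip x w) =
        ∑ w : Fin d → Bool, ∏ i, Real.exp (t * (sgn (x i) * sgn (w i))) := by
        simp only [ip, Finset.mul_sum, Real.exp_sum]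
    _ = ∏ i, ∑ b, Real.exp (t * (sgn (x i) * sgn b)) := by rw [Fintype.prod_sum]
    _ = (2 * Real.cosh t) ^ d := by simp only [hcoord, Finset.prod_const, Finset.card_fin]

lemma hfun_nonneg (w : Fin d → Bool) (o : Option (Fin d → Bool)) : 0 ≤ hfun w o := by
  cases o <;> simp only [hfun] <;> positivity

lemma hfun_le_one (w : Fin d → Bool) (o : Option (Fin d → Bool)) : hfun w o ≤ 1 := by
  rcases o with _ | x
  · exact zero_le_one
  · have hip : max 0 (ip x w - d / 2) ≤ (d : ℝ) / 2 :=
      max_le (by positivity) (by linarith [ip_le x w])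
    calc 2 / (d : ℝ) * max 0 (ip x w - d / 2) ≤ 2 / d * (d / 2) := by gcongr
      _ = (d / d : ℝ) := by ring
      _ ≤ 1 := div_self_le_one _

lemma hfun_self (hd : d ≠ 0) (w : Fin d → Bool) : hfun w (some w) = 1 := by
  have hhalf : (d : ℝ) - d / 2 = d / 2 := by ring
  rw [hfun, ip_self, hhalf, max_eq_right (by positivity)]
  field_simp

lemma hfun_le_exp {t : ℝ} (ht : 0 ≤ t) (w x : Fin d → Bool) :
    hfun w (some x) ≤ Real.exp (t * (ip x w - d / 2)) := by
  rcases le_total (ip x w - d / 2) 0 with h | h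
  · rw [hfun, max_eq_left h, mul_zero]
    positivity
  · exact (hfun_le_one w _).trans (Real.one_le_exp (mul_nonneg ht h))

lemma sum_hfun_le (o : Option (Fin d → Bool)) :
    ∑ w, hfun w o ≤ 2 ^ d * Real.exp (-(d / 8)) := by
  rcases o with _ | x
  · simp only [hfun, Finset.sum_const_zero]
    positivity
  calc ∑ w, hfun w (some x) ≤ ∑ w, Real.exp (1 / 2 * (ip x w - d / 2)) :=
        Finset.sum_le_sum fun w _ ↦ hfun_le_exp (by norm_num) w x
    _ = (2 * Real.cosh (1 / 2)) ^ d * Real.exp (-(d / 4)) := by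
        rw [← sum_exp_mul_ip _ x, Finset.sum_mul]
        refine Finset.sum_congr rfl fun w _ ↦ ?_
        rw [← Real.exp_add]
        ring_nf
    _ ≤ (2 * Real.exp ((1 / 2) ^ 2 / 2)) ^ d * Real.exp (-(d / 4)) := by
        gcongr
        exact Real.cosh_le_exp_half_sq _
    _ = 2 ^ d * Real.exp (-(d / 8)) := by
        rw [mul_pow, ← Real.exp_nat_mul, mul_assoc, ← Real.exp_add]
        ring_nf

end SignVectors

instance (d K : ℕ) : DiscreteMeasurableSpace (ExAct d K) := ⟨fun _ ↦ trivial⟩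

lemma exists_integral_hfun_le {d K : ℕ} (p : Measure (ExAct d K)) [IsProbabilityMeasure p] :
    ∃ w : Fin d → Bool, ∫ a, hfun w a.1 ∂p ≤ Real.exp (-(d / 8)) :=
  exists_integral_le_of_sum_le p (fun _ ↦ .of_finite) fun a ↦ by simpa using sum_hfun_le a.1

/-- The gap `Δ = √(K/(20T))` between the best arm and the other arms of the bandit component `v`. -/
def armGap (K T : ℕ) : ℝ := √((K : ℝ) / (20 * (T : ℝ)))

lemma armGap_nonneg (K T : ℕ) : 0 ≤ armGap K T := Real.sqrt_nonneg _

lemma armGap_sq (K T : ℕ) : armGap K T ^ 2 = K / (20 * T) := Real.sq_sqrt (by positivity)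

section Models

variable {d K T : ℕ} {γ : ℝ}

lemma fEx_sub_fhat (w : Fin d → Bool) (k : Fin K) (a : ExAct d K) :
    fEx d K T γ w k a - fhat d K T γ a =
      (1 - γ) * hfun w a.1 + γ * (Prod.snd ⁻¹' {k}).indicator (fun _ ↦ armGap K T) a := by
  by_cases h : a.2 = k
  · rw [Set.indicator_of_mem (s := Prod.snd ⁻¹' {k}) h, fEx, fhat, if_pos h, armGap]
    ring
  · rw [Set.indicator_of_notMem (s := Prod.snd ⁻¹' {k}) h, fEx, fhat, if_neg h]
    ring

lemma sq_fEx_sub_fhat_le (hγ : γ ∈ Set.Icc 0 1) (w : Fin d → Bool) (k : Fin K) (a : ExAct d K) :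
    (fEx d K T γ w k a - fhat d K T γ a) ^ 2 ≤
      (1 - γ) * hfun w a.1 + γ * (Prod.snd ⁻¹' {k}).indicator (fun _ ↦ armGap K T ^ 2) a := by
  have hγ₀ : 0 ≤ γ := hγ.1
  have hγ₁ : 0 ≤ 1 - γ := sub_nonneg.2 hγ.2
  calc (fEx d K T γ w k a - fhat d K T γ a) ^ 2
      ≤ (1 - γ) * hfun w a.1 ^ 2 +
          γ * (Prod.snd ⁻¹' {k}).indicator (fun _ ↦ armGap K T) a ^ 2 := by
        rw [fEx_sub_fhat]
        exact even_two.convexOn_pow.2 trivial trivial hγ₁ hγ₀ (sub_add_cancel 1 γ)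
    _ ≤ (1 - γ) * hfun w a.1 + γ * (Prod.snd ⁻¹' {k}).indicator (fun _ ↦ armGap K T ^ 2) a := by
        gcongr
        · exact pow_le_of_le_one (hfun_nonneg w _) (hfun_le_one w _) two_ne_zero
        · exact (congrFun (Set.indicator_comp_of_zero (g := (· ^ 2)) (zero_pow two_ne_zero)) a).ge

lemma integral_sq_fEx_sub_fhat_le (hγ : γ ∈ Set.Icc 0 1) (w : Fin d → Bool) (k : Fin K)
    (p : Measure (ExAct d K)) [IsFiniteMeasure p] :
    ∫ a, (fEx d K T γ w k a - fhat d K T γ a) ^ 2 ∂p ≤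
      (1 - γ) * ∫ a, hfun w a.1 ∂p + γ * (p.real (Prod.snd ⁻¹' {k}) * armGap K T ^ 2) := by
  refine (integral_mono .of_finite .of_finite (sq_fEx_sub_fhat_le hγ w k)).trans_eq ?_
  rw [integral_add .of_finite .of_finite, integral_const_mul, integral_const_mul,
    integral_indicator_const _ .of_discrete, smul_eq_mul]

lemma integral_sub_fEx (w : Fin d → Bool) (k : Fin K) (p : Measure (ExAct d K))
    [IsProbabilityMeasure p] :
    ∫ a, (γ - fEx d K T γ w k a) ∂p =
      γ * armGap K T * (1 - p.real (Prod.snd ⁻¹' {k})) - (1 - γ) * ∫ a, hfun w a.1 ∂p := by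
  have hfEx (a : ExAct d K) : γ - fEx d K T γ w k a = γ * armGap K T - ((1 - γ) * hfun w a.1 +
      γ * (Prod.snd ⁻¹' {k}).indicator (fun _ ↦ armGap K T) a) := by
    rw [← fEx_sub_fhat, fhat, armGap]
    ring
  simp only [hfEx]
  rw [integral_sub .of_finite .of_finite, integral_add .of_finite .of_finite, integral_const,
    integral_const_mul, integral_const_mul, integral_indicator_const _ .of_discrete,
    probReal_univ, one_smul, smul_eq_mul]
  ring

lemma iSup_fEx (hd : d ≠ 0) (hγ : γ ∈ Set.Icc 0 1) (w : Fin d → Bool) (k : Fin K) :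
    ⨆ a, fEx d K T γ w k a = 1 := by
  have : Nonempty (ExAct d K) := ⟨(none, k)⟩
  have hle (a : ExAct d K) : fEx d K T γ w k a ≤ 1 := by
    have harm : (if a.2 = k then 1 else 1 - armGap K T) ≤ 1 := by
      split_ifs
      · exact le_rfl
      · exact sub_le_self _ (armGap_nonneg K T)
    calc fEx d K T γ w k a ≤ (1 - γ) * 1 + γ * 1 :=
          add_le_add (mul_le_mul_of_nonneg_left (hfun_le_one w _) (sub_nonneg.2 hγ.2))
            (mul_le_mul_of_nonneg_left harm hγ.1)
      _ = 1 := by ring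
  refine le_antisymm (ciSup_le hle) ?_
  have hmax : fEx d K T γ w k (some w, k) = 1 := by simp [fEx, hfun_self hd]
  exact hmax.symm.le.trans (le_ciSup (Set.finite_range _).bddAbove _)

lemma finite_setOf_eq_fEx (d K T : ℕ) (γ : ℝ) : {f | ∃ w k, f = fEx d K T γ w k}.Finite := by
  refine (Set.finite_range fun q : (Fin d → Bool) × Fin K ↦ fEx d K T γ q.1 q.2).subset ?_
  rintro _ ⟨w, k, rfl⟩
  exact ⟨(w, k), rfl⟩

lemma one_div_le_mul_armGap_div_four (hγ : 0 ≤ γ) (hKT : 4 ≤ γ ^ 2 * K * T) :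
    1 / (9 * (T : ℝ)) ≤ γ * armGap K T / 4 := by
  have hT : 0 < T := Nat.pos_of_ne_zero (by rintro rfl; norm_num at hKT)
  have hΔ : 0 ≤ armGap K T := armGap_nonneg K T
  rw [← sq_le_sq₀ (by positivity) (by positivity), div_pow, div_pow, mul_pow γ, armGap_sq]
  field_simp
  linarith

section Bounds

variable {w : Fin d → Bool} {k : Fin K} {p : Measure (ExAct d K)} [IsProbabilityMeasure p]

lemma integral_sq_fEx_sub_fhat_le_one_div (hγ : γ ∈ Set.Icc 0 1)
    (hw : ∫ a, hfun w a.1 ∂p ≤ 1 / (9 * T)) (hk : p.real (Prod.snd ⁻¹' {k}) ≤ 1 / K) :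
    ∫ a, (fEx d K T γ w k a - fhat d K T γ a) ^ 2 ∂p ≤ 1 / (9 * T) := by
  have hγ₀ : 0 ≤ γ := hγ.1
  have hγ₁ : 0 ≤ 1 - γ := sub_nonneg.2 hγ.2
  have harm : p.real (Prod.snd ⁻¹' {k}) * armGap K T ^ 2 ≤ 1 / (9 * (T : ℝ)) :=
    calc p.real (Prod.snd ⁻¹' {k}) * armGap K T ^ 2 ≤ 1 / K * armGap K T ^ 2 := by gcongr
      _ = (K / K : ℝ) * (1 / (20 * (T : ℝ))) := by rw [armGap_sq]; ring
      _ ≤ 1 * (1 / (20 * (T : ℝ))) := by gcongr; exact div_self_le_one _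
      _ = 1 / (T : ℝ) * (1 / 20) := by ring
      _ ≤ 1 / (T : ℝ) * (1 / 9) := by gcongr; norm_num
      _ = 1 / (9 * (T : ℝ)) := by ring
  calc ∫ a, (fEx d K T γ w k a - fhat d K T γ a) ^ 2 ∂p
      ≤ (1 - γ) * ∫ a, hfun w a.1 ∂p + γ * (p.real (Prod.snd ⁻¹' {k}) * armGap K T ^ 2) :=
        integral_sq_fEx_sub_fhat_le hγ w k p
    _ ≤ (1 - γ) * (1 / (9 * T)) + γ * (1 / (9 * T)) := by gcongr
    _ = 1 / (9 * T) := by ring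

lemma le_integral_sub_fEx (hγ : γ ∈ Set.Icc 0 1) (hKT : 4 ≤ γ ^ 2 * K * T)
    (hw : ∫ a, hfun w a.1 ∂p ≤ 1 / (9 * T)) (hk : p.real (Prod.snd ⁻¹' {k}) ≤ 1 / 4) :
    γ / 2 * armGap K T ≤ ∫ a, (γ - fEx d K T γ w k a) ∂p := by
  have hγ₁ : 0 ≤ 1 - γ := sub_nonneg.2 hγ.2
  have hΔ : 0 ≤ γ * armGap K T := mul_nonneg hγ.1 (armGap_nonneg K T)
  have hhfun : (1 - γ) * ∫ a, hfun w a.1 ∂p ≤ γ * armGap K T / 4 :=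
    calc (1 - γ) * ∫ a, hfun w a.1 ∂p ≤ (1 - γ) * (1 / (9 * T)) := by gcongr
      _ ≤ 1 / (9 * T) := mul_le_of_le_one_left (by positivity) (sub_le_self 1 hγ.1)
      _ ≤ γ * armGap K T / 4 := one_div_le_mul_armGap_div_four hγ.1 hKT
  calc γ / 2 * armGap K T = γ * armGap K T * (1 - 1 / 4) - γ * armGap K T / 4 := by ring
    _ ≤ γ * armGap K T * (1 - p.real (Prod.snd ⁻¹' {k})) - (1 - γ) * ∫ a, hfun w a.1 ∂p := by
        gcongr
    _ = ∫ a, (γ - fEx d K T γ w k a) ∂p := (integral_sub_fEx w k p).symm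

end Bounds

lemma exists_fEx_sq_error_le_and_le_regret (hγ : γ ∈ Set.Icc 0 1)
    (hdT : 9 * (T : ℝ) ≤ Real.exp (d / 8)) (hK : 4 ≤ (K : ℝ)) (hKT : 4 ≤ γ ^ 2 * K * T)
    (p : Measure (ExAct d K)) [IsProbabilityMeasure p] :
    ∃ (w : Fin d → Bool) (k : Fin K),
      ∫ a, (fEx d K T γ w k a - fhat d K T γ a) ^ 2 ∂p ≤ 1 / (9 * T) ∧
        γ / 2 * armGap K T ≤ ∫ a, (γ - fEx d K T γ w k a) ∂p := by
  have hT : 0 < T := Nat.pos_of_ne_zero (by rintro rfl; norm_num at hKT)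
  have : NeZero K := ⟨by rintro rfl; norm_num at hK⟩
  obtain ⟨w, hw⟩ := exists_integral_hfun_le p
  obtain ⟨k, hk⟩ := exists_measureReal_preimage_singleton_le p (X := Prod.snd) .of_discrete
  rw [Real.exp_neg, ← one_div] at hw
  rw [Fintype.card_fin] at hk
  have hw' : ∫ a, hfun w a.1 ∂p ≤ 1 / (9 * T) :=
    hw.trans (one_div_le_one_div_of_le (by positivity) hdT)
  exact ⟨w, k, integral_sq_fEx_sub_fhat_le_one_div hγ hw' hk,
    le_integral_sub_fEx hγ hKT hw' (hk.trans (by gcongr))⟩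

end Models

theorem example_dec_lower_bound_general (d K T : ℕ) (γ : ℝ) (hγ : γ ∈ Set.Icc 0 1)
    (hdT : 9 * (T : ℝ) ≤ Real.exp (d / 8)) (hK : 4 ≤ (K : ℝ)) (hKT : 4 ≤ γ ^ 2 * K * T) :
    (∀ p : Measure (ExAct d K), IsProbabilityMeasure p →
      ∃ (w : Fin d → Bool) (k : Fin K),
        (∫ a, (fEx d K T γ w k a - fhat d K T γ a) ^ 2 ∂p ≤ (1 / (3 * √T)) ^ 2) ∧
        γ / 2 * √(K / (20 * T)) ≤ ∫ a, (γ * 1 - fEx d K T γ w k a) ∂p) ∧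
    γ / 2 * √(K / (20 * T)) ≤
      decConstrained γ (1 / (3 * √T))
        ({f | ∃ w k, f = fEx d K T γ w k} ∪ {fhat d K T γ}) (fhat d K T γ) := by
  have hT : T ≠ 0 := by rintro rfl; norm_num at hKT
  have hd : d ≠ 0 := by
    rintro rfl
    rw [Nat.cast_zero, zero_div, Real.exp_zero] at hdT
    norm_cast at hdT
    omega
  have hε : (1 / (3 * √T)) ^ 2 = 1 / (9 * (T : ℝ)) := by
    rw [div_pow, mul_pow, Real.sq_sqrt (Nat.cast_nonneg T)]
    norm_num
  have hmodel (p : Measure (ExAct d K)) [IsProbabilityMeasure p] :=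
    exists_fEx_sq_error_le_and_le_regret hγ hdT hK hKT p
  simp only [mul_one, hε]
  refine ⟨fun p _ ↦ hmodel p, ?_⟩
  have : Nonempty (ExAct d K) := ⟨(none, ⟨0, by rify; linarith⟩)⟩
  refine le_decConstrained ((finite_setOf_eq_fEx d K T γ).union (Set.finite_singleton _)) fun p ↦ ?_
  obtain ⟨w, k, herror, hregret⟩ := hmodel p
  refine ⟨_, .inl ⟨w, k, rfl⟩, herror.trans_eq hε.symm, ?_⟩
  simpa only [iSup_fEx hd hγ, mul_one, armGap] using hregret

/-- **Proposition 2, first part (DEC lower bound for Example 1).** For every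
distribution `p` on the action set there is a model `(w,k) ∈ M̃` that satisfies the
squared-error constraint at level `ε = 1/(3√T)` and has instantaneous γ-regret at
least `(γ/2)√(K/(20T))`; consequently `dec^γ_ε(M̃ ∪ {M̂}, M̂) ≥ (γ/2)√(K/(20T))`. -/
theorem example_dec_lower_bound (d K T : ℕ) (γ : ℝ) (hγ : γ ∈ Set.Ioc (0:ℝ) 1)
    (hdT : 180 * (T:ℝ) ≤ Real.exp ((d:ℝ) / 8))
    (hKT : (K:ℝ) ≤ 20 * (T:ℝ))
    (hKγ : 6000 / γ^2 ≤ (K:ℝ)) :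
    (∀ p : Measure (ExAct d K), IsProbabilityMeasure p →
      ∃ (w : Fin d → Bool) (k : Fin K),
        (∫ a, (fEx d K T γ w k a - fhat d K T γ a)^2 ∂p ≤ (1 / (3 * Real.sqrt T))^2) ∧
        ((γ/2) * Real.sqrt ((K:ℝ) / (20 * T)) ≤
          ∫ a, (γ * 1 - fEx d K T γ w k a) ∂p)) ∧
    (γ/2) * Real.sqrt ((K:ℝ) / (20 * T)) ≤
      decConstrained γ (1 / (3 * Real.sqrt T))
        ({f | ∃ w k, f = fEx d K T γ w k} ∪ {fhat d K T γ}) (fhat d K T γ) := by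
  have hKγ' : 6000 ≤ γ ^ 2 * K := by rwa [div_le_iff₀' (pow_pos hγ.1 2)] at hKγ
  have hK : (6000 : ℝ) ≤ K :=
    hKγ'.trans (mul_le_of_le_one_left K.cast_nonneg (pow_le_one₀ hγ.1.le hγ.2))
  exact example_dec_lower_bound_general d K T γ ⟨hγ.1.le, hγ.2⟩ (by linarith) (by linarith)
    (by nlinarith)

end
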